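/- For all n ≥ 1, the expected value of the largest fixed point of a uniformly random permutation of [n] conditioned on having at least one fixed point equals d_{n+1} / (n! - d_n). Equivalently, Σ_{π ∈ S_n, π not a derangement} ℓ(π) = d_{n+1} and |S_n \ D_n| = n! - d_n, so E[X_n] = d_{n+1}/(n! - d_n). -/

import Mathlib

/-!
Deleting the largest fixed point `p` of a non-derangement of `[n + 1]` leaves a permutation `σ` of
`[n]` with `ℓ(σ) < p`, where `ℓ(σ) = 0` if `σ` is a derangement, and every pair `(σ, p)` with
`ℓ(σ) < p ≤ n + 1` arises exactly once. Counting these pairs gives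
`(n + 1)! - d_{n+1} = ∑ σ ∈ S_n, (n + 1 - ℓ(σ)) = (n + 1)! - ∑ σ ∈ S_n, ℓ(σ)`.
-/

open Classical

noncomputable section

/-- `π` has at least one fixed point. -/
def hasFP {n : ℕ} (π : Equiv.Perm (Fin n)) : Prop := ∃ i, π i = i

/-- The set of (1-based) values of the fixed points of `π`, viewing a permutation of
`Fin n` as a permutation of `[n] = {1, …, n}` via `i ↦ i + 1`. -/
def fixVals {n : ℕ} (π : Equiv.Perm (Fin n)) : Set ℕ :=
  {k | ∃ i : Fin n, π i = i ∧ (i : ℕ) + 1 = k}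

/-- The largest fixed point `ℓ(π)` (in 1-based indexing). -/
def lfp {n : ℕ} (π : Equiv.Perm (Fin n)) : ℕ := sSup (fixVals π)

/-- The smallest fixed point `s(π)` (in 1-based indexing). -/
def sfp {n : ℕ} (π : Equiv.Perm (Fin n)) : ℕ := sInf (fixVals π)

/-- `d n` is the number of derangements of `[n]`. -/
def d (n : ℕ) : ℕ := Set.ncard {π : Equiv.Perm (Fin n) | ∀ i, π i ≠ i}

/-- `a n k` is the number of permutations of `[n]` with at least one fixed point
whose largest fixed point equals `k`. -/
def a (n k : ℕ) : ℕ := Set.ncard {π : Equiv.Perm (Fin n) | hasFP π ∧ lfp π = k}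

/-- `b n k` is the number of permutations of `[n]` with at least one fixed point
whose smallest fixed point equals `k`. -/
def b (n k : ℕ) : ℕ := Set.ncard {π : Equiv.Perm (Fin n) | hasFP π ∧ sfp π = k}

/-- `alpha n` is the sum of the largest fixed points over all non-derangements of `[n]`. -/
def alpha (n : ℕ) : ℕ :=
  ∑ π ∈ Finset.univ.filter (fun π : Equiv.Perm (Fin n) => hasFP π), lfp π

/-- `beta n` is the sum of the smallest fixed points over all non-derangements of `[n]`. -/
def beta (n : ℕ) : ℕ :=
  ∑ π ∈ Finset.univ.filter (fun π : Equiv.Perm (Fin n) => hasFP π), sfp π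

section LargestFixedPoint

variable {n : ℕ} {π : Equiv.Perm (Fin n)}

theorem bddAbove_fixVals (π : Equiv.Perm (Fin n)) : BddAbove (fixVals π) :=
  ⟨n, by rintro k ⟨i, -, rfl⟩; exact i.isLt⟩

theorem lfp_le_iff {k : ℕ} : lfp π ≤ k ↔ ∀ i, π i = i → (i : ℕ) < k := by
  rw [lfp, csSup_le_iff' (bddAbove_fixVals π)]
  simp [fixVals]

theorem lfp_le (π : Equiv.Perm (Fin n)) : lfp π ≤ n :=
  lfp_le_iff.2 fun i _ => i.isLt

theorem lfp_eq_zero_iff : lfp π = 0 ↔ ¬hasFP π := by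
  rw [← Nat.le_zero, lfp_le_iff]
  simp [hasFP]

theorem lfp_eq_add_one_iff {p : Fin n} :
    lfp π = p + 1 ↔ IsGreatest (Function.fixedPoints π) p := by
  constructor
  · intro h
    have upper : ∀ i, π i = i → i ≤ p := fun i hi =>
      Nat.lt_succ_iff.1 (lfp_le_iff.1 h.le i hi)
    refine ⟨?_, upper⟩
    by_contra hp
    have : lfp π ≤ p := lfp_le_iff.2 fun i hi =>
      (upper i hi).lt_of_ne fun hip => hp (hip ▸ hi)
    omega
  · rintro ⟨hp, upper⟩
    refine le_antisymm (lfp_le_iff.2 fun i hi => Nat.lt_succ_iff.2 (upper hi)) ?_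
    by_contra! hlt
    exact (lfp_le_iff.1 (Nat.lt_succ_iff.1 hlt) p hp).false

theorem hasFP_iff_exists_lfp_eq_add_one : hasFP π ↔ ∃ p : Fin n, lfp π = p + 1 := by
  constructor
  · intro h
    have hpos : lfp π ≠ 0 := fun h0 => lfp_eq_zero_iff.1 h0 h
    have hle := lfp_le π
    exact ⟨⟨lfp π - 1, by omega⟩, by simp only; omega⟩
  · rintro ⟨p, hp⟩
    exact ⟨p, (lfp_eq_add_one_iff.1 hp).1⟩

theorem card_hasFP_eq_sum_card_lfp_eq (n : ℕ) :
    (Finset.univ.filter fun π : Equiv.Perm (Fin n) => hasFP π).card =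
      ∑ p : Fin n, (Finset.univ.filter fun π : Equiv.Perm (Fin n) => lfp π = p + 1).card := by
  rw [← Finset.card_biUnion]
  · congr 1
    ext π
    simp [hasFP_iff_exists_lfp_eq_add_one]
  · intro p _ q _ hpq
    exact Finset.disjoint_filter.2 fun π _ hp hq => hpq (Fin.ext (by omega))

theorem card_hasFP_add_d (n : ℕ) :
    (Finset.univ.filter fun π : Equiv.Perm (Fin n) => hasFP π).card + d n = n.factorial := by
  have derangements_eq_compl :
      {π : Equiv.Perm (Fin n) | ∀ i, π i ≠ i} = {π | hasFP π}ᶜ := by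
    ext π
    simp [hasFP]
  rw [d, derangements_eq_compl, ← Set.ncard_coe_finset, Finset.coe_filter_univ,
    Set.ncard_add_ncard_compl, Nat.card_perm, Nat.card_fin]

end LargestFixedPoint

section InsertFixedPoint

variable {n : ℕ} (p : Fin (n + 1)) (σ : Equiv.Perm (Fin n))

/-- The permutation of `[n + 1]` that fixes `p` and acts as `σ` on the remaining points, which are
relabelled by `p.succAbove`. It inverts the deletion of a fixed point. Since `p` is 0-based, the
inserted fixed point is `p + 1` in the indexing of `lfp`. -/
def insertFixedPoint : Equiv.Perm (Fin (n + 1)) :=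
  (finSuccEquiv' p).symm.permCongr (Equiv.optionCongr σ)

theorem insertFixedPoint_apply_self : insertFixedPoint p σ p = p := by
  simp [insertFixedPoint, Equiv.permCongr_apply]

theorem insertFixedPoint_apply_succAbove (i : Fin n) :
    insertFixedPoint p σ (p.succAbove i) = p.succAbove (σ i) := by
  simp [insertFixedPoint, Equiv.permCongr_apply]

theorem insertFixedPoint_injective : Function.Injective (insertFixedPoint p) :=
  (finSuccEquiv' p).symm.permCongr.injective.comp Equiv.optionCongr_injective

theorem range_insertFixedPoint :
    Set.range (insertFixedPoint p) = {π : Equiv.Perm (Fin (n + 1)) | π p = p} := by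
  refine Set.Subset.antisymm ?_ fun π hπ => ?_
  · rintro _ ⟨σ, rfl⟩
    exact insertFixedPoint_apply_self p σ
  · refine ⟨Equiv.removeNone ((finSuccEquiv' p).permCongr π), ?_⟩
    have fixes_none : (finSuccEquiv' p).permCongr π none = none := by
      simp [Equiv.permCongr_apply, hπ.out]
    rw [insertFixedPoint, map_equiv_removeNone, fixes_none, Equiv.swap_self]
    ext x
    simp [Equiv.permCongr_apply]

theorem lfp_insertFixedPoint_eq_add_one_iff : lfp (insertFixedPoint p σ) = p + 1 ↔ lfp σ ≤ p := by
  have succAbove_le_iff (i : Fin n) : p.succAbove i ≤ p ↔ (i : ℕ) < p := by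
    rw [(p.succAbove_ne i).le_iff_lt, Fin.succAbove_lt_iff_castSucc_lt, Fin.lt_def,
      Fin.val_castSucc]
  rw [lfp_eq_add_one_iff, lfp_le_iff, IsGreatest, mem_upperBounds, Fin.forall_iff_succAbove p]
  simp [Function.IsFixedPt, insertFixedPoint_apply_self,
    insertFixedPoint_apply_succAbove, succAbove_le_iff]

theorem card_lfp_eq_add_one_eq_card_lfp_le :
    (Finset.univ.filter fun π : Equiv.Perm (Fin (n + 1)) => lfp π = p + 1).card =
      (Finset.univ.filter fun σ : Equiv.Perm (Fin n) => lfp σ ≤ p).card := by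
  rw [← Finset.card_image_of_injective _ (insertFixedPoint_injective p)]
  congr 1
  ext π
  simp only [Finset.mem_filter_univ, Finset.mem_image]
  constructor
  · intro h
    obtain ⟨σ, rfl⟩ : π ∈ Set.range (insertFixedPoint p) := by
      rw [range_insertFixedPoint]
      exact (lfp_eq_add_one_iff.1 h).1
    exact ⟨σ, (lfp_insertFixedPoint_eq_add_one_iff p σ).1 h, rfl⟩
  · rintro ⟨σ, hσ, rfl⟩
    exact (lfp_insertFixedPoint_eq_add_one_iff p σ).2 hσ

end InsertFixedPoint

theorem card_hasFP_succ_eq_sum (n : ℕ) :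
    (Finset.univ.filter fun π : Equiv.Perm (Fin (n + 1)) => hasFP π).card =
      ∑ σ : Equiv.Perm (Fin n), (n + 1 - lfp σ) := by
  have card_insertion_points (σ : Equiv.Perm (Fin n)) :
      (Finset.univ.filter fun p : Fin (n + 1) => lfp σ ≤ p).card = n + 1 - lfp σ := by
    convert Fin.card_Ici (⟨lfp σ, Nat.lt_succ_iff.2 (lfp_le σ)⟩ : Fin (n + 1)) using 2
    ext p
    simp [Fin.le_def]
  calc (Finset.univ.filter fun π : Equiv.Perm (Fin (n + 1)) => hasFP π).card
      = ∑ p : Fin (n + 1), (Finset.univ.filter fun σ : Equiv.Perm (Fin n) => lfp σ ≤ p).card := by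
        simp only [card_hasFP_eq_sum_card_lfp_eq, card_lfp_eq_add_one_eq_card_lfp_le]
    _ = ∑ σ : Equiv.Perm (Fin n), (Finset.univ.filter fun p : Fin (n + 1) => lfp σ ≤ p).card :=
        (Finset.sum_card_bipartiteAbove_eq_sum_card_bipartiteBelow _).symm
    _ = ∑ σ : Equiv.Perm (Fin n), (n + 1 - lfp σ) :=
        Finset.sum_congr rfl fun σ _ => card_insertion_points σ

theorem sum_lfp_eq_d_succ (n : ℕ) : ∑ σ : Equiv.Perm (Fin n), lfp σ = d (n + 1) := by
  have complementary_sum : ∑ σ : Equiv.Perm (Fin n), (n + 1 - lfp σ) +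
      ∑ σ : Equiv.Perm (Fin n), lfp σ = (n + 1).factorial := by
    rw [← Finset.sum_add_distrib, Finset.sum_congr rfl fun σ _ =>
      Nat.sub_add_cancel ((lfp_le σ).trans n.le_succ)]
    simp [Fintype.card_perm, Nat.factorial_succ, mul_comm]
  have count := card_hasFP_add_d (n + 1)
  rw [card_hasFP_succ_eq_sum] at count
  omega

theorem sum_lfp_hasFP_eq_d_succ (n : ℕ) :
    ∑ π ∈ Finset.univ.filter (fun π : Equiv.Perm (Fin n) => hasFP π), lfp π = d (n + 1) := by
  rw [← sum_lfp_eq_d_succ]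
  exact Finset.sum_filter_of_ne fun π _ hπ => not_not.1 (mt lfp_eq_zero_iff.2 hπ)

theorem stmt17 (n : ℕ) (hn : 1 ≤ n) :
    ((∑ π ∈ Finset.univ.filter (fun π : Equiv.Perm (Fin n) => hasFP π), lfp π : ℕ) : ℝ) /
        ((Finset.univ.filter (fun π : Equiv.Perm (Fin n) => hasFP π)).card : ℝ) =
      (d (n + 1) : ℝ) / ((n.factorial : ℝ) - d n) := by
  have card_eq : ((Finset.univ.filter fun π : Equiv.Perm (Fin n) => hasFP π).card : ℝ) =
      (n.factorial : ℝ) - d n :=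
    eq_sub_of_add_eq (mod_cast card_hasFP_add_d n)
  rw [sum_lfp_hasFP_eq_d_succ, card_eq]
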